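/- Let G be a finite group, U : G → (unitary d×d complex matrices) a group homomorphism, H a subgroup of G, and ψ a unit vector in ℂ^d such that for every h ∈ H there exists c ∈ ℂ with U(h)ψ = c·ψ (ψ is a common eigenvector of U restricted to H). Let P_ψ denote the orthogonal projection of ℂ^d onto the span of ψ (the outer product |ψ⟩⟨ψ|). Then for every g' ∈ G, Σ_{g ∈ g'H} (d/|G|)·U(g)·P_ψ·U(g)* = (d·|H|/|G|)·U(g')·P_ψ·U(g')*, where the sum runs over the left coset g'H. In particular, if |H| = |G|/d, then Σ_{g ∈ g'H} (d/|G|)·U(g)·P_ψ·U(g)* = U(g')·P_ψ·U(g')*, which is a rank-one orthogonal projection. -/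

import Mathlib

open scoped BigOperators Kronecker ComplexOrder Matrix

noncomputable section


namespace QProg

/-- The positive-semidefinite square root of a matrix, extended by `0` to all matrices. -/
noncomputable def matSqrt {α : Type*} [Fintype α] [DecidableEq α]
    (A : Matrix α α ℂ) : Matrix α α ℂ :=
  @dite _ A.PosSemidef (Classical.propDecidable _) (fun h =>
    (h.1.eigenvectorUnitary : Matrix α α ℂ) *
      Matrix.diagonal (RCLike.ofReal ∘ Real.sqrt ∘ h.1.eigenvalues) *
      (star h.1.eigenvectorUnitary : Matrix α α ℂ)) (fun _ => 0)

/-- The fidelity `F(ρ,σ) = Tr √(√ρ σ √ρ)` of two (density) matrices. -/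
noncomputable def fid {α : Type*} [Fintype α] [DecidableEq α]
    (ρ σ : Matrix α α ℂ) : ℝ :=
  ((matSqrt (matSqrt ρ * σ * matSqrt ρ)).trace).re

/-- A density matrix: positive semidefinite with unit trace. -/
def IsDensity {α : Type*} [Fintype α] [DecidableEq α] (ρ : Matrix α α ℂ) : Prop :=
  ρ.PosSemidef ∧ ρ.trace = 1

/-- An `n`-outcome POVM: positive semidefinite effects summing to the identity. -/
def IsPOVM {α : Type*} [Fintype α] [DecidableEq α] {n : ℕ}
    (E : Fin n → Matrix α α ℂ) : Prop :=
  (∀ i, (E i).PosSemidef) ∧ ∑ i, E i = 1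

/-- The outcome distribution `p^E_ρ(i) = Tr[E(i) ρ]`. -/
noncomputable def outDist {α : Type*} [Fintype α] [DecidableEq α] {n : ℕ}
    (E : Fin n → Matrix α α ℂ) (ρ : Matrix α α ℂ) (i : Fin n) : ℝ :=
  ((E i * ρ).trace).re

/-- The Bhattacharyya coefficient `B(p,q) = ∑ᵢ √(p i) √(q i)`. -/
noncomputable def bhat {n : ℕ} (p q : Fin n → ℝ) : ℝ :=
  ∑ i, Real.sqrt (p i) * Real.sqrt (q i)

/-- `B(E₁,E₂)`: infimum of `B(p^{E₁}_{ρ₁}, p^{E₂}_{ρ₂}) / F(ρ₁,ρ₂)` over pairs of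
density matrices with nonvanishing fidelity. -/
noncomputable def obsB {α : Type*} [Fintype α] [DecidableEq α] {n : ℕ}
    (E₁ E₂ : Fin n → Matrix α α ℂ) : ℝ :=
  sInf { r : ℝ | ∃ ρ₁ ρ₂ : Matrix α α ℂ, IsDensity ρ₁ ∧ IsDensity ρ₂ ∧
    fid ρ₁ ρ₂ ≠ 0 ∧ r = bhat (outDist E₁ ρ₁) (outDist E₂ ρ₂) / fid ρ₁ ρ₂ }

/-- A post-processing from `n` outcomes to `m` outcomes. -/
def IsPostProc {n m : ℕ} (lam : Fin n → Fin m → ℝ) : Prop :=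
  (∀ i y, 0 ≤ lam i y) ∧ ∀ i, ∑ y, lam i y = 1

/-- The action `(λ⋆E)(y) = ∑ᵢ λ(i|y) E(i)` of a post-processing on a POVM. -/
noncomputable def ppStar {α : Type*} [Fintype α] [DecidableEq α] {n m : ℕ}
    (lam : Fin n → Fin m → ℝ) (E : Fin n → Matrix α α ℂ) (y : Fin m) :
    Matrix α α ℂ :=
  ∑ i, (lam i y : ℂ) • E i

/-- The action `(λ⋆p)(y) = ∑ᵢ λ(i|y) p(i)` of a post-processing on a probability vector. -/
noncomputable def ppStarVec {n m : ℕ} (lam : Fin n → Fin m → ℝ) (p : Fin n → ℝ)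
    (y : Fin m) : ℝ :=
  ∑ i, lam i y * p i

/-- A probability vector on `{1,…,n}`. -/
def IsProbVec {n : ℕ} (p : Fin n → ℝ) : Prop :=
  (∀ i, 0 ≤ p i) ∧ ∑ i, p i = 1

/-- `F(λ₁,λ₂)`: infimum of `B(λ₁⋆p, λ₂⋆p)` over probability vectors `p`. -/
noncomputable def ppF {n m : ℕ} (lam₁ lam₂ : Fin n → Fin m → ℝ) : ℝ :=
  sInf { r : ℝ | ∃ p : Fin n → ℝ, IsProbVec p ∧
    r = bhat (ppStarVec lam₁ p) (ppStarVec lam₂ p) }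

theorem conj_outer {d : ℕ} (A : Matrix (Fin d) (Fin d) ℂ) (v : Fin d → ℂ) :
    A * Matrix.vecMulVec v (star v) * Aᴴ
      = Matrix.vecMulVec (A.mulVec v) (star (A.mulVec v)) := by
  rw [Matrix.mul_vecMulVec, Matrix.vecMulVec_mul, Matrix.star_mulVec]

theorem unitary_norm {d : ℕ} (A : Matrix.unitaryGroup (Fin d) ℂ) (v : Fin d → ℂ) :
    star ((A : Matrix (Fin d) (Fin d) ℂ).mulVec v) ⬝ᵥ (A : Matrix (Fin d) (Fin d) ℂ).mulVec v
      = star v ⬝ᵥ v := by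
  have h : (A : Matrix (Fin d) (Fin d) ℂ)ᴴ * (A : Matrix (Fin d) (Fin d) ℂ) = 1 :=
    Matrix.UnitaryGroup.star_mul_self A
  rw [Matrix.star_mulVec, Matrix.dotProduct_mulVec, Matrix.vecMul_vecMul, h, Matrix.vecMul_one]

theorem outer_phase {d : ℕ} (A : Matrix.unitaryGroup (Fin d) ℂ) (v : Fin d → ℂ)
    (hv : star v ⬝ᵥ v = 1) (c : ℂ)
    (hc : (A : Matrix (Fin d) (Fin d) ℂ).mulVec v = c • v) :
    (A : Matrix (Fin d) (Fin d) ℂ) * Matrix.vecMulVec v (star v) *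
      (A : Matrix (Fin d) (Fin d) ℂ)ᴴ = Matrix.vecMulVec v (star v) := by
  have h := unitary_norm A v
  rw [hc, star_smul, smul_dotProduct, dotProduct_smul, hv] at h
  simp only [smul_eq_mul, mul_one] at h
  rw [conj_outer, hc, star_smul, Matrix.smul_vecMulVec, Matrix.vecMulVec_smul, smul_smul,
    mul_comm, h, one_smul]

/-- Section 3.2: merging the effects of the covariant observable seeded by a
common eigenvector `ψ` of `U` restricted to a subgroup `H` along the left coset `g'H` yields
`(d |H| / |G|) U(g') P_ψ U(g')*`; when `|G| = d |H|` this is a rank-one orthogonal projection. -/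
theorem covariant_coset_merging {d : ℕ} {G : Type*} [Group G] [Fintype G]
    (U : G →* Matrix.unitaryGroup (Fin d) ℂ)
    (H : Subgroup G) [Fintype H]
    (ψ : Fin d → ℂ) (hψ : star ψ ⬝ᵥ ψ = 1)
    (heig : ∀ h : H, ∃ c : ℂ,
      (U (h : G) : Matrix (Fin d) (Fin d) ℂ).mulVec ψ = c • ψ)
    (g' : G) :
    (∑ h : H, ((d : ℂ) / (Fintype.card G : ℂ)) •
        ((U (g' * (h : G)) : Matrix (Fin d) (Fin d) ℂ) *
          Matrix.vecMulVec ψ (star ψ) *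
          (U (g' * (h : G)) : Matrix (Fin d) (Fin d) ℂ)ᴴ) =
      (((d : ℂ) * (Fintype.card H : ℂ)) / (Fintype.card G : ℂ)) •
        ((U g' : Matrix (Fin d) (Fin d) ℂ) * Matrix.vecMulVec ψ (star ψ) *
          (U g' : Matrix (Fin d) (Fin d) ℂ)ᴴ)) ∧
    (Fintype.card G = d * Fintype.card H →
      (∑ h : H, ((d : ℂ) / (Fintype.card G : ℂ)) •
          ((U (g' * (h : G)) : Matrix (Fin d) (Fin d) ℂ) *
            Matrix.vecMulVec ψ (star ψ) *
            (U (g' * (h : G)) : Matrix (Fin d) (Fin d) ℂ)ᴴ) =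
        (U g' : Matrix (Fin d) (Fin d) ℂ) * Matrix.vecMulVec ψ (star ψ) *
          (U g' : Matrix (Fin d) (Fin d) ℂ)ᴴ) ∧
      (let P := (U g' : Matrix (Fin d) (Fin d) ℂ) * Matrix.vecMulVec ψ (star ψ) *
          (U g' : Matrix (Fin d) (Fin d) ℂ)ᴴ
       P * P = P ∧ Pᴴ = P ∧ P.rank = 1)) := by
  have key : ∀ h : H, (U (g' * (h : G)) : Matrix (Fin d) (Fin d) ℂ) *
          Matrix.vecMulVec ψ (star ψ) * (U (g' * (h : G)) : Matrix (Fin d) (Fin d) ℂ)ᴴ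
        = (U g' : Matrix (Fin d) (Fin d) ℂ) * Matrix.vecMulVec ψ (star ψ) *
          (U g' : Matrix (Fin d) (Fin d) ℂ)ᴴ := by
    intro h
    obtain ⟨c, hc⟩ := heig h
    have h1 := outer_phase (U (h : G)) ψ hψ c hc
    rw [map_mul, Submonoid.coe_mul, Matrix.conjTranspose_mul]
    conv_rhs => rw [← h1]
    simp only [Matrix.mul_assoc]
  have main : (∑ h : H, ((d : ℂ) / (Fintype.card G : ℂ)) •
        ((U (g' * (h : G)) : Matrix (Fin d) (Fin d) ℂ) *
          Matrix.vecMulVec ψ (star ψ) *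
          (U (g' * (h : G)) : Matrix (Fin d) (Fin d) ℂ)ᴴ) =
      (((d : ℂ) * (Fintype.card H : ℂ)) / (Fintype.card G : ℂ)) •
        ((U g' : Matrix (Fin d) (Fin d) ℂ) * Matrix.vecMulVec ψ (star ψ) *
          (U g' : Matrix (Fin d) (Fin d) ℂ)ᴴ)) := by
    simp only [key]
    rw [Finset.sum_const, Finset.card_univ, ← Nat.cast_smul_eq_nsmul ℂ, smul_smul]
    congr 1
    ring
  refine ⟨main, fun hcard => ⟨?_, ?_⟩⟩
  · have hG : (Fintype.card G : ℂ) ≠ 0 := Nat.cast_ne_zero.mpr Fintype.card_ne_zero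
    have hc : (d : ℂ) * (Fintype.card H : ℂ) = (Fintype.card G : ℂ) := by
      rw [hcard]; push_cast; rfl
    rw [main, hc, div_self hG, one_smul]
  · intro P
    have hn := (unitary_norm (U g') ψ).trans hψ
    have hP : P = Matrix.vecMulVec ((U g' : Matrix (Fin d) (Fin d) ℂ).mulVec ψ)
        (star ((U g' : Matrix (Fin d) (Fin d) ℂ).mulVec ψ)) := conj_outer _ _
    clear_value P
    subst hP
    generalize (U g' : Matrix (Fin d) (Fin d) ℂ).mulVec ψ = φ at hn
    refine ⟨?_, ?_, ?_⟩
    · rw [Matrix.vecMulVec_mul_vecMulVec, hn, one_smul]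
    · rw [Matrix.conjTranspose_vecMulVec, star_star]
    · apply le_antisymm (Matrix.rank_vecMulVec_le _ _)
      rw [Nat.one_le_iff_ne_zero]
      intro h0
      rw [Matrix.rank, Submodule.finrank_eq_zero, LinearMap.range_eq_bot] at h0
      replace h0 := Matrix.mulVec_injective (by
        funext v
        exact (LinearMap.congr_fun h0 v).trans (Matrix.zero_mulVec v).symm)
      have h2 := congrArg Matrix.trace h0
      rw [Matrix.trace_vecMulVec, dotProduct_comm, hn] at h2
      simp at h2
end QProg
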